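/- Let l, m be nonnegative integers, set α = N(a + 1/2) − 3/2, β = 1 − m − N(a + 1/2), x̄ = (1/N) Σ_i x_i, t = 2r²/(N x̄²) − 1, and μ_{lm}(x) = e^{−ω r²/2} x̄^m L^{(−β)}_l(ω r²) Π_{i=1}^N |x_i − x_{i+1}|^a. Then for every spin state |s⟩ ∈ Σ, the Σ-valued function Ψ^{(0)}_{lm} = μ_{lm} · P^{(α,β)}_{⌊m/2⌋}(t) · Λ|s⟩ satisfies H_0 Ψ^{(0)}_{lm} = (Nω(2a+1) + 2ω(2l+m)) Ψ^{(0)}_{lm} at every point x ∈ C_0 with x̄ ≠ 0. -/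

import Mathlib

noncomputable section

/-- The spin space `Σ`: complex functions on `Fin N → Fin d`. -/
abbrev Spin (N d : ℕ) : Type := (Fin N → Fin d) → ℂ

/-- Partial derivative `∂_i F` of a function of `N` real variables. -/
noncomputable def pd {N : ℕ} {E : Type} [NormedAddCommGroup E] [NormedSpace ℝ E]
    (i : Fin N) (F : (Fin N → ℝ) → E) : (Fin N → ℝ) → E :=
  fun x => fderiv ℝ F x (Pi.single i 1)

/-- The spin exchange operator `S_{ij}`, transposing the `i`-th and `j`-th spin slots. -/
def Sop {N d : ℕ} (i j : Fin N) (v : Spin N d) : Spin N d :=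
  fun c => v (c ∘ Equiv.swap i j)

/-- The action of a permutation `π ∈ S_N` on the spin space, permuting the `N` spin slots. -/
def spinPerm {N d : ℕ} (π : Equiv.Perm (Fin N)) (v : Spin N d) : Spin N d :=
  fun c => v (c ∘ π)

/-- The spin vector `|s_i⟩ = (1/N!) ∑_{π ∈ S_N, π(1) = i} π |s⟩`. -/
noncomputable def sComp {N d : ℕ} [NeZero N] (s : Spin N d) (i : Fin N) : Spin N d :=
  (N.factorial : ℂ)⁻¹ •
    ∑ π ∈ Finset.univ.filter (fun π : Equiv.Perm (Fin N) => π 0 = i), spinPerm π s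

/-- The symmetrization `Λ|s⟩ = ∑ i, |s_i⟩`. -/
noncomputable def Lam {N d : ℕ} [NeZero N] (s : Spin N d) : Spin N d :=
  ∑ i : Fin N, sComp s i

/-- The configuration space `C_0 = {x : x_1 < ⋯ < x_N}`. -/
def C0 (N : ℕ) : Set (Fin N → ℝ) := {x | StrictMono x}

/-- The Hamiltonian `H_0 = -∑ i ∂_i² + V_0` with
`V_0 = ω² r² + ∑ i 2a²/((x_i - x_{i-1})(x_i - x_{i+1}))
  + ∑ i 2a (x_i - x_{i+1})⁻² (a - S_{i,i+1})` (indices cyclic). -/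
noncomputable def H0 {N d : ℕ} [NeZero N] (a ω : ℝ)
    (Ψ : (Fin N → ℝ) → Spin N d) : (Fin N → ℝ) → Spin N d :=
  fun x =>
    -(∑ i : Fin N, pd i (pd i Ψ) x)
    + (ω ^ 2 * (∑ i : Fin N, (x i) ^ 2)
        + ∑ i : Fin N, 2 * a ^ 2 / ((x i - x (i - 1)) * (x i - x (i + 1)))) • Ψ x
    + ∑ i : Fin N, (2 * a / (x i - x (i + 1)) ^ 2) • (a • Ψ x - Sop i (i + 1) (Ψ x))

/-- The center of mass `x̄ = (1/N) ∑ i x_i`. -/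
noncomputable def xbar {N : ℕ} (x : Fin N → ℝ) : ℝ := (∑ i : Fin N, x i) / N

/-- The generalized binomial coefficient `C(x, j) = x(x-1)⋯(x-j+1)/j!`. -/
noncomputable def genBinom (x : ℝ) (j : ℕ) : ℝ :=
  (descPochhammer ℝ j).eval x / j.factorial

/-- The generalized Laguerre polynomial
`L^{(λ)}_n(t) = ∑_{k=0}^n (-1)^k C(n+λ, n-k) t^k / k!`. -/
noncomputable def laguerre (lam : ℝ) (n : ℕ) (t : ℝ) : ℝ :=
  ∑ k ∈ Finset.range (n + 1),
    (-1 : ℝ) ^ k * genBinom ((n : ℝ) + lam) (n - k) * t ^ k / (k.factorial : ℝ)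

/-- The Jacobi polynomial
`P^{(α,β)}_n(t) = ∑_{k=0}^n C(n+α, n-k) C(n+β, k) ((t-1)/2)^k ((t+1)/2)^{n-k}`. -/
noncomputable def jacobi (α β : ℝ) (n : ℕ) (t : ℝ) : ℝ :=
  ∑ k ∈ Finset.range (n + 1),
    genBinom ((n : ℝ) + α) (n - k) * genBinom ((n : ℝ) + β) k *
      ((t - 1) / 2) ^ k * ((t + 1) / 2) ^ (n - k)

/-- The variable `t = 2r²/(N x̄²) - 1`. -/
noncomputable def tvar {N : ℕ} (x : Fin N → ℝ) : ℝ :=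
  2 * (∑ i : Fin N, (x i) ^ 2) / ((N : ℝ) * xbar x ^ 2) - 1

/-- The gauge factor `μ_{lm}(x) = e^{-ω r²/2} x̄^m L^{(-β)}_l(ω r²) ∏ i |x_i - x_{i+1}|^a`,
where `β = 1 - m - N(a + 1/2)`. -/
noncomputable def mulm {N : ℕ} [NeZero N] (a ω : ℝ) (l m : ℕ) (x : Fin N → ℝ) : ℝ :=
  Real.exp (-(ω / 2) * ∑ i : Fin N, (x i) ^ 2) * xbar x ^ m *
    laguerre (-(1 - (m : ℝ) - (N : ℝ) * (a + 1 / 2))) l (ω * ∑ i : Fin N, (x i) ^ 2) *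
    ∏ i : Fin N, |x i - x (i + 1)| ^ a

/-
Let `w = ∏ |x_i - x_{i+1}|^a` and let `v` be a symmetric spin vector. Conjugation by `w` cancels
the singular part of `V_0` and turns `H_0` into the diffusion `ω² r² - 𝓛`, where
`𝓛 = Δ + 2 ∇ log w · ∇`. The components of the drift `b = 2 ∇ log w` sum to zero and `b · x = 2aN`,
so on functions of `r²` and `x̄` the operator `𝓛` acts as a Laplacian in the effective dimension
`2δ = N(2a + 1)`.

The function `q = x̄^m P(t)` is homogeneous of degree `m`, and `𝓛 q = 0` is the Jacobi equation for
`P`. Multiplying a homogeneous solution of degree `m` by a radial function `g(r²)` reduces the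
eigenvalue problem to an ordinary differential equation for `g`, which
`g(s) = e^{-ω s / 2} L_l^{(m + δ - 1)}(ω s)` satisfies by the Laguerre equation.
-/

section PartialDerivatives

variable {N : ℕ} {F G : (Fin N → ℝ) → ℝ} {x : Fin N → ℝ} {φ : ℝ → ℝ}

lemma pd_smul_const {E : Type} [NormedAddCommGroup E] [NormedSpace ℝ E]
    (hF : DifferentiableAt ℝ F x) (v : E) (i : Fin N) :
    pd i (fun z => F z • v) x = pd i F x • v := by
  simp [pd, fderiv_smul_const hF]

lemma pd_add (hF : DifferentiableAt ℝ F x) (hG : DifferentiableAt ℝ G x) (i : Fin N) :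
    pd i (fun z => F z + G z) x = pd i F x + pd i G x := by
  simp [pd, fderiv_fun_add hF hG]

lemma pd_mul (hF : DifferentiableAt ℝ F x) (hG : DifferentiableAt ℝ G x) (i : Fin N) :
    pd i (fun z => F z * G z) x = pd i F x * G x + F x * pd i G x := by
  simp only [pd, fderiv_fun_mul hF hG, add_apply, smul_apply, smul_eq_mul]
  ring

lemma pd_sub (hF : DifferentiableAt ℝ F x) (hG : DifferentiableAt ℝ G x) (i : Fin N) :
    pd i (fun z => F z - G z) x = pd i F x - pd i G x := by
  simp [pd, fderiv_fun_sub hF hG]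

lemma pd_comp (hφ : DifferentiableAt ℝ φ (F x)) (hF : DifferentiableAt ℝ F x) (i : Fin N) :
    pd i (fun z => φ (F z)) x = deriv φ (F x) * pd i F x := by
  have hcomp := hφ.hasDerivAt.comp_hasFDerivAt x hF.hasFDerivAt
  rw [pd, show (fun z => φ (F z)) = φ ∘ F from rfl, hcomp.fderiv]
  rfl

lemma pd_apply_eq (i j : Fin N) (x : Fin N → ℝ) :
    pd i (fun z => z j) x = if j = i then 1 else 0 := by
  rw [pd, (hasFDerivAt_apply j x).fderiv]
  simp [Pi.single_apply]

lemma pd_apply_sub_apply (i j k : Fin N) (x : Fin N → ℝ) :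
    pd i (fun z => z j - z k) x = (if j = i then 1 else 0) - (if k = i then 1 else 0) := by
  rw [pd_sub (by fun_prop) (by fun_prop), pd_apply_eq, pd_apply_eq]

lemma differentiableAt_inv_sub {j k : Fin N} (h : x j ≠ x k) :
    DifferentiableAt ℝ (fun z => (z j - z k)⁻¹) x :=
  DifferentiableAt.fun_inv (by fun_prop) (sub_ne_zero.2 h)

lemma pd_inv_sub {j k : Fin N} (h : x j ≠ x k) (i : Fin N) :
    pd i (fun z => (z j - z k)⁻¹) x =
      -((x j - x k) ^ 2)⁻¹ * ((if j = i then 1 else 0) - (if k = i then 1 else 0)) := by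
  rw [pd_comp (differentiableAt_inv (sub_ne_zero.2 h)) (by fun_prop), deriv_inv,
    pd_apply_sub_apply]

lemma pd_sum {ι : Type*} (s : Finset ι) {F : ι → (Fin N → ℝ) → ℝ}
    (hF : ∀ j ∈ s, DifferentiableAt ℝ (F j) x) (i : Fin N) :
    pd i (fun z => ∑ j ∈ s, F j z) x = ∑ j ∈ s, pd i (F j) x := by
  simp [pd, fderiv_fun_sum hF]

lemma pd_congr {E : Type} [NormedAddCommGroup E] [NormedSpace ℝ E]
    {F G : (Fin N → ℝ) → E} (h : F =ᶠ[nhds x] G) (i : Fin N) : pd i F x = pd i G x := by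
  rw [pd, pd, h.fderiv_eq]

lemma differentiableAt_pd (hF : ContDiffAt ℝ 2 F x) (i : Fin N) :
    DifferentiableAt ℝ (pd i F) x := by
  have hF' : ContDiffAt ℝ 1 (fderiv ℝ F) x := hF.fderiv_right (by norm_num)
  exact (hF'.differentiableAt one_ne_zero).clm_apply (differentiableAt_const _)

lemma eventually_differentiableAt (hF : ContDiffAt ℝ 2 F x) :
    ∀ᶠ z in nhds x, DifferentiableAt ℝ F z :=
  (hF.eventually (by simp)).mono fun _ h => h.differentiableAt two_ne_zero

lemma pd_pd_smul_const {E : Type} [NormedAddCommGroup E] [NormedSpace ℝ E]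
    (hF : ContDiffAt ℝ 2 F x) (v : E) (i : Fin N) :
    pd i (pd i fun z => F z • v) x = pd i (pd i F) x • v := by
  have hfirst : (pd i fun z => F z • v) =ᶠ[nhds x] fun z => pd i F z • v :=
    (eventually_differentiableAt hF).mono fun z hz => pd_smul_const hz v i
  rw [pd_congr hfirst, pd_smul_const (differentiableAt_pd hF i)]

lemma pd_pd_mul (hF : ContDiffAt ℝ 2 F x) (hG : ContDiffAt ℝ 2 G x) (i : Fin N) :
    pd i (pd i fun z => F z * G z) x =
      pd i (pd i F) x * G x + 2 * (pd i F x * pd i G x) + F x * pd i (pd i G) x := by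
  have hF₁ := hF.differentiableAt two_ne_zero
  have hG₁ := hG.differentiableAt two_ne_zero
  have hF₂ := differentiableAt_pd hF i
  have hG₂ := differentiableAt_pd hG i
  have hfirst : (pd i fun z => F z * G z) =ᶠ[nhds x] fun z => pd i F z * G z + F z * pd i G z := by
    filter_upwards [eventually_differentiableAt hF, eventually_differentiableAt hG] with z hFz hGz
      using pd_mul hFz hGz i
  rw [pd_congr hfirst, pd_add (hF₂.fun_mul hG₁) (hF₁.fun_mul hG₂), pd_mul hF₂ hG₁, pd_mul hF₁ hG₂]
  ring

lemma pd_pd_comp (hφ : ContDiffAt ℝ 2 φ (F x)) (hF : ContDiffAt ℝ 2 F x) (i : Fin N) :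
    pd i (pd i fun z => φ (F z)) x =
      deriv (deriv φ) (F x) * pd i F x ^ 2 + deriv φ (F x) * pd i (pd i F) x := by
  have hF₁ := hF.differentiableAt two_ne_zero
  have hφ' : DifferentiableAt ℝ (deriv φ) (F x) := by
    rw [show deriv φ = fun s => fderiv ℝ φ s 1 from funext fun _ => fderiv_apply_one_eq_deriv.symm]
    have h : ContDiffAt ℝ 1 (fderiv ℝ φ) (F x) := hφ.fderiv_right (by norm_num)
    exact (h.differentiableAt one_ne_zero).clm_apply (differentiableAt_const _)
  have hfirst : (pd i fun z => φ (F z)) =ᶠ[nhds x] fun z => deriv φ (F z) * pd i F z := by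
    filter_upwards [eventually_differentiableAt hF,
      hF₁.continuousAt.eventually (hφ.eventually (by simp))] with z hFz hφz
      using pd_comp (hφz.differentiableAt two_ne_zero) hFz i
  rw [pd_congr hfirst, pd_mul (hφ'.fun_comp' x hF₁) (differentiableAt_pd hF i), pd_comp hφ' hF₁]
  ring

end PartialDerivatives

section DriftLaplacian

variable {N : ℕ} {F G H : (Fin N → ℝ) → ℝ} {x b : Fin N → ℝ} {φ : ℝ → ℝ}

/-- The carré du champ `Γ(F, G) = ∇F · ∇G`, the bilinear form measuring the failure of
`driftLaplacian b` to be a derivation. -/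
def carreDuChamp (F G : (Fin N → ℝ) → ℝ) (x : Fin N → ℝ) : ℝ := ∑ i, pd i F x * pd i G x

/-- The diffusion operator `𝓛_b F = ΔF + b · ∇F` at the point `x`. As it is only ever evaluated at
one point at a time, the drift `b` is a vector and not a vector field. -/
def driftLaplacian (b : Fin N → ℝ) (F : (Fin N → ℝ) → ℝ) (x : Fin N → ℝ) : ℝ :=
  ∑ i, (pd i (pd i F) x + b i * pd i F x)

lemma carreDuChamp_comm (F G : (Fin N → ℝ) → ℝ) (x : Fin N → ℝ) :
    carreDuChamp F G x = carreDuChamp G F x :=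
  Finset.sum_congr rfl fun _ _ => mul_comm _ _

lemma carreDuChamp_mul (hG : DifferentiableAt ℝ G x) (hH : DifferentiableAt ℝ H x) :
    carreDuChamp F (fun z => G z * H z) x =
      carreDuChamp F G x * H x + G x * carreDuChamp F H x := by
  simp only [carreDuChamp, pd_mul hG hH, Finset.sum_mul, Finset.mul_sum, ← Finset.sum_add_distrib]
  exact Finset.sum_congr rfl fun i _ => by ring

lemma carreDuChamp_comp (hφ : DifferentiableAt ℝ φ (G x)) (hG : DifferentiableAt ℝ G x) :
    carreDuChamp F (fun z => φ (G z)) x = deriv φ (G x) * carreDuChamp F G x := by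
  simp only [carreDuChamp, pd_comp hφ hG, Finset.mul_sum]
  exact Finset.sum_congr rfl fun i _ => by ring

lemma driftLaplacian_mul (hF : ContDiffAt ℝ 2 F x) (hG : ContDiffAt ℝ 2 G x) :
    driftLaplacian b (fun z => F z * G z) x =
      driftLaplacian b F x * G x + 2 * carreDuChamp F G x + F x * driftLaplacian b G x := by
  simp only [driftLaplacian, carreDuChamp, pd_pd_mul hF hG,
    pd_mul (hF.differentiableAt two_ne_zero) (hG.differentiableAt two_ne_zero),
    Finset.sum_mul, Finset.mul_sum, ← Finset.sum_add_distrib]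
  exact Finset.sum_congr rfl fun i _ => by ring

lemma driftLaplacian_comp (hφ : ContDiffAt ℝ 2 φ (F x)) (hF : ContDiffAt ℝ 2 F x) :
    driftLaplacian b (fun z => φ (F z)) x =
      deriv (deriv φ) (F x) * carreDuChamp F F x + deriv φ (F x) * driftLaplacian b F x := by
  simp only [driftLaplacian, carreDuChamp, pd_pd_comp hφ hF,
    pd_comp (hφ.differentiableAt two_ne_zero) (hF.differentiableAt two_ne_zero),
    Finset.mul_sum, ← Finset.sum_add_distrib]
  exact Finset.sum_congr rfl fun i _ => by ring

-- The substitution `F ↦ F w` turns `Δ` into a diffusion whose drift is `2 ∇ log w`.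
lemma sum_pd_pd_mul_eq_driftLaplacian {w : (Fin N → ℝ) → ℝ} {h : Fin N → ℝ}
    (hF : ContDiffAt ℝ 2 F x) (hw : ContDiffAt ℝ 2 w x) (hlog : ∀ i, pd i w x = w x * h i) :
    ∑ i, pd i (pd i fun z => F z * w z) x =
      w x * driftLaplacian (fun i => 2 * h i) F x + F x * ∑ i, pd i (pd i w) x := by
  simp only [driftLaplacian, pd_pd_mul hF hw, hlog, Finset.mul_sum, ← Finset.sum_add_distrib]
  exact Finset.sum_congr rfl fun i _ => by ring

end DriftLaplacian

section RadialAndCenterOfMass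

variable {N : ℕ} {x b : Fin N → ℝ}

/-- The squared radius `r² = ∑ i x_i²`. -/
def rSq (x : Fin N → ℝ) : ℝ := ∑ i, x i ^ 2

lemma contDiff_rSq : ContDiff ℝ 2 (rSq (N := N)) := by
  unfold rSq
  fun_prop

lemma contDiff_xbar : ContDiff ℝ 2 (xbar (N := N)) := by
  unfold xbar
  fun_prop

lemma pd_rSq (i : Fin N) : pd i rSq = fun x => 2 * x i := by
  funext x
  have hsq (j : Fin N) : pd i (fun z => z j ^ 2) x = 2 * x j * if j = i then 1 else 0 := by
    rw [pd_comp (φ := fun s => s ^ 2) (by fun_prop) (by fun_prop), pd_apply_eq]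
    simp
  unfold rSq
  rw [pd_sum _ (fun j _ => by fun_prop)]
  simp [hsq]

lemma pd_xbar (i : Fin N) : pd i xbar = fun _ => (N : ℝ)⁻¹ := by
  funext x
  unfold xbar
  rw [pd_comp (φ := fun s => s / N) (by fun_prop) (by fun_prop), pd_sum _ (fun j _ => by fun_prop)]
  simp [pd_apply_eq]

lemma carreDuChamp_rSq_rSq : carreDuChamp rSq rSq x = 4 * rSq x := by
  simp only [carreDuChamp, pd_rSq, rSq, Finset.mul_sum]
  exact Finset.sum_congr rfl fun i _ => by ring

lemma carreDuChamp_rSq_xbar : carreDuChamp rSq xbar x = 2 * xbar x := by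
  simp only [carreDuChamp, pd_rSq, pd_xbar, xbar, ← Finset.sum_mul, ← Finset.mul_sum]
  ring

lemma carreDuChamp_xbar_xbar [NeZero N] : carreDuChamp (xbar (N := N)) xbar x = (N : ℝ)⁻¹ := by
  simp [carreDuChamp, pd_xbar, NeZero.ne]

lemma driftLaplacian_rSq : driftLaplacian b rSq x = 2 * (N + ∑ i, b i * x i) := by
  have hpd (i : Fin N) : pd i (fun x => 2 * x i) x = 2 := by
    rw [pd_comp (φ := fun s => 2 * s) (by fun_prop) (by fun_prop), pd_apply_eq]
    simp
  simp only [driftLaplacian, pd_rSq, hpd, Finset.sum_add_distrib, Finset.sum_const,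
    Finset.card_univ, Fintype.card_fin, nsmul_eq_mul, mul_add, Finset.mul_sum]
  exact congrArg₂ _ (mul_comm _ _) (Finset.sum_congr rfl fun i _ => by ring)

lemma driftLaplacian_xbar (hb : ∑ i, b i = 0) : driftLaplacian b xbar x = 0 := by
  have hpd (i : Fin N) : pd i (fun _ : Fin N → ℝ => (N : ℝ)⁻¹) x = 0 := by
    simp [pd]
  simp [driftLaplacian, pd_xbar, hpd, ← Finset.sum_mul, hb]

-- Euler's identity in disguise: `Γ(r², Q)` is twice the radial derivative `x · ∇Q`.
lemma driftLaplacian_comp_rSq_mul {g : ℝ → ℝ} {Q : (Fin N → ℝ) → ℝ} {k : ℝ}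
    (hg : ContDiffAt ℝ 2 g (rSq x)) (hQ : ContDiffAt ℝ 2 Q x)
    (heuler : carreDuChamp rSq Q x = 2 * k * Q x) (hharm : driftLaplacian b Q x = 0) :
    driftLaplacian b (fun z => g (rSq z) * Q z) x =
      (4 * rSq x * deriv (deriv g) (rSq x)
        + 2 * (N + ∑ i, b i * x i + 2 * k) * deriv g (rSq x)) * Q x := by
  have hr : ContDiffAt ℝ 2 rSq x := contDiff_rSq.contDiffAt
  rw [driftLaplacian_mul (hg.fun_comp x hr) hQ, driftLaplacian_comp hg hr,
    carreDuChamp_comm _ Q,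
    carreDuChamp_comp (hg.differentiableAt two_ne_zero) (hr.differentiableAt two_ne_zero),
    carreDuChamp_comm Q, carreDuChamp_rSq_rSq, driftLaplacian_rSq, heuler, hharm]
  ring

lemma contDiffAt_zpow (k : ℤ) {s : ℝ} (hs : s ≠ 0) : ContDiffAt ℝ 2 (fun s : ℝ => s ^ k) s :=
  (analyticAt_id.zpow hs).contDiffAt

lemma contDiffAt_xbar_zpow (k : ℤ) (hx : xbar x ≠ 0) : ContDiffAt ℝ 2 (fun z => xbar z ^ k) x :=
  (contDiffAt_zpow k hx).fun_comp x contDiff_xbar.contDiffAt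

lemma carreDuChamp_xbar_zpow (F : (Fin N → ℝ) → ℝ) (k : ℤ) (hx : xbar x ≠ 0) :
    carreDuChamp F (fun z => xbar z ^ k) x = k * xbar x ^ (k - 1) * carreDuChamp F xbar x := by
  rw [carreDuChamp_comp (φ := fun s => s ^ k)
    ((contDiffAt_zpow k hx).differentiableAt two_ne_zero)
    (contDiff_xbar.differentiable two_ne_zero x), deriv_zpow]

lemma driftLaplacian_xbar_zpow [NeZero N] (hb : ∑ i, b i = 0) (k : ℤ) (hx : xbar x ≠ 0) :
    driftLaplacian b (fun z => xbar z ^ k) x = k * (k - 1) * xbar x ^ (k - 2) / N := by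
  rw [driftLaplacian_comp (φ := fun s => s ^ k) (contDiffAt_zpow k hx) contDiff_xbar.contDiffAt,
    driftLaplacian_xbar hb, carreDuChamp_xbar_xbar, deriv_zpow', deriv_const_mul_field, deriv_zpow,
    show k - 1 - 1 = k - 2 by ring]
  push_cast
  ring

lemma tvar_eq : tvar (N := N) = fun z => 2 / N * (rSq z * xbar z ^ (-2 : ℤ)) - 1 := by
  funext z
  rw [tvar, rSq, zpow_neg, zpow_ofNat]
  ring

lemma contDiffAt_rSq_mul_xbar_zpow (k : ℤ) (hx : xbar x ≠ 0) :
    ContDiffAt ℝ 2 (fun z => rSq z * xbar z ^ k) x :=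
  contDiff_rSq.contDiffAt.mul (contDiffAt_xbar_zpow k hx)

lemma contDiffAt_tvar (hx : xbar x ≠ 0) : ContDiffAt ℝ 2 tvar x := by
  rw [tvar_eq]
  exact (contDiffAt_const.mul (contDiffAt_rSq_mul_xbar_zpow _ hx)).sub contDiffAt_const

lemma carreDuChamp_tvar (F : (Fin N → ℝ) → ℝ) (hx : xbar x ≠ 0) :
    carreDuChamp F tvar x = 2 / (N * xbar x ^ 2) * carreDuChamp F rSq x
      - 4 * rSq x / (N * xbar x ^ 3) * carreDuChamp F xbar x := by
  rw [tvar_eq, carreDuChamp_comp (φ := fun s => 2 / N * s - 1) (by fun_prop)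
      ((contDiffAt_rSq_mul_xbar_zpow _ hx).differentiableAt two_ne_zero),
    carreDuChamp_mul (contDiff_rSq.differentiable two_ne_zero x)
      ((contDiffAt_xbar_zpow _ hx).differentiableAt two_ne_zero),
    carreDuChamp_xbar_zpow _ _ hx, ((hasDerivAt_const_mul _).sub_const _).deriv,
    show (-2 : ℤ) - 1 = -3 by norm_num, zpow_neg, zpow_neg, zpow_ofNat, zpow_ofNat]
  push_cast
  field_simp
  ring

lemma carreDuChamp_rSq_tvar (hx : xbar x ≠ 0) : carreDuChamp rSq tvar x = 0 := by
  rw [carreDuChamp_tvar _ hx, carreDuChamp_rSq_rSq, carreDuChamp_rSq_xbar]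
  field_simp
  ring

lemma carreDuChamp_xbar_tvar [NeZero N] (hx : xbar x ≠ 0) :
    carreDuChamp xbar tvar x = 2 * (1 - tvar x) / (N * xbar x) := by
  have hN : (N : ℝ) ≠ 0 := NeZero.ne _
  rw [carreDuChamp_tvar _ hx, carreDuChamp_comm, carreDuChamp_rSq_xbar, carreDuChamp_xbar_xbar,
    tvar, ← rSq]
  field_simp
  ring

lemma carreDuChamp_tvar_tvar [NeZero N] (hx : xbar x ≠ 0) :
    carreDuChamp tvar tvar x = -4 * (1 - tvar x ^ 2) / (N * xbar x ^ 2) := by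
  have hN : (N : ℝ) ≠ 0 := NeZero.ne _
  rw [carreDuChamp_tvar _ hx, carreDuChamp_comm, carreDuChamp_rSq_tvar hx,
    carreDuChamp_comm, carreDuChamp_xbar_tvar hx, tvar, ← rSq]
  field_simp
  ring

lemma driftLaplacian_tvar [NeZero N] (hb : ∑ i, b i = 0) (hx : xbar x ≠ 0) :
    driftLaplacian b tvar x =
      (4 * (N + ∑ i, b i * x i) - 10 + 6 * tvar x) / (N * xbar x ^ 2) := by
  have hN : (N : ℝ) ≠ 0 := NeZero.ne _
  have hderiv : deriv (fun s : ℝ => 2 / N * s - 1) = fun _ => 2 / (N : ℝ) :=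
    funext fun _ => ((hasDerivAt_const_mul _).sub_const _).deriv
  rw [tvar_eq, driftLaplacian_comp (φ := fun s => 2 / N * s - 1) (by fun_prop)
      (contDiffAt_rSq_mul_xbar_zpow _ hx),
    driftLaplacian_mul contDiff_rSq.contDiffAt (contDiffAt_xbar_zpow _ hx),
    carreDuChamp_xbar_zpow _ _ hx, driftLaplacian_xbar_zpow hb _ hx, driftLaplacian_rSq,
    carreDuChamp_rSq_xbar, hderiv, deriv_const, show (-2 : ℤ) - 1 = -3 by norm_num,
    show (-2 : ℤ) - 2 = -4 by norm_num, zpow_neg, zpow_neg, zpow_neg, zpow_ofNat, zpow_ofNat,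
    zpow_ofNat]
  push_cast
  field_simp
  ring

-- The function is homogeneous of degree `k`, since `x̄` has degree `1` and `t` has degree `0`.
lemma carreDuChamp_rSq_xbar_zpow_mul_comp_tvar {J : ℝ → ℝ} (k : ℤ)
    (hJ : ContDiffAt ℝ 2 J (tvar x)) (hx : xbar x ≠ 0) :
    carreDuChamp rSq (fun z => xbar z ^ k * J (tvar z)) x =
      2 * k * (xbar x ^ k * J (tvar x)) := by
  have ht := contDiffAt_tvar hx
  rw [carreDuChamp_mul ((contDiffAt_xbar_zpow k hx).differentiableAt two_ne_zero)
      ((hJ.fun_comp x ht).differentiableAt two_ne_zero),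
    carreDuChamp_comp (hJ.differentiableAt two_ne_zero) (ht.differentiableAt two_ne_zero),
    carreDuChamp_rSq_tvar hx, carreDuChamp_xbar_zpow _ _ hx, carreDuChamp_rSq_xbar,
    zpow_sub_one₀ hx]
  field_simp
  ring

lemma driftLaplacian_xbar_zpow_mul_comp_tvar [NeZero N] {J : ℝ → ℝ} (k : ℤ) (hb : ∑ i, b i = 0)
    (hJ : ContDiffAt ℝ 2 J (tvar x)) (hx : xbar x ≠ 0) :
    driftLaplacian b (fun z => xbar z ^ k * J (tvar z)) x =
      -4 * xbar x ^ (k - 2) / N * ((1 - tvar x ^ 2) * deriv (deriv J) (tvar x)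
        + (5 / 2 - (N + ∑ i, b i * x i) - k - (3 / 2 - k) * tvar x) * deriv J (tvar x)
        - k * (k - 1) / 4 * J (tvar x)) := by
  have hN : (N : ℝ) ≠ 0 := NeZero.ne _
  have ht := contDiffAt_tvar hx
  have hpow := contDiffAt_xbar_zpow k hx
  rw [driftLaplacian_mul hpow (hJ.fun_comp x ht), driftLaplacian_comp hJ ht,
    driftLaplacian_xbar_zpow hb k hx,
    carreDuChamp_comp (hJ.differentiableAt two_ne_zero) (ht.differentiableAt two_ne_zero),
    carreDuChamp_comm, carreDuChamp_xbar_zpow _ _ hx, carreDuChamp_comm,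
    carreDuChamp_xbar_tvar hx, carreDuChamp_tvar_tvar hx, driftLaplacian_tvar hb hx,
    zpow_sub_one₀ hx, zpow_sub₀ hx, zpow_ofNat]
  field_simp
  ring

end RadialAndCenterOfMass

section ClassicalPolynomials

open Polynomial

lemma genBinom_succ (x : ℝ) (j : ℕ) :
    genBinom x (j + 1) * (j + 1) = genBinom x j * (x - j) := by
  rw [genBinom, genBinom, descPochhammer_succ_eval, Nat.factorial_succ]
  push_cast
  field_simp

lemma deriv_polynomial_eval (p : ℝ[X]) :
    deriv (fun s => p.eval s) = fun s => p.derivative.eval s :=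
  funext fun _ => p.deriv

/-- The generalized Laguerre polynomial `L^{(lam)}_n` as an element of `ℝ[X]`. -/
def laguerrePoly (lam : ℝ) (n : ℕ) : ℝ[X] :=
  ∑ k ∈ Finset.range (n + 1),
    C ((-1 : ℝ) ^ k * genBinom (n + lam) (n - k) / k.factorial) * X ^ k

lemma laguerre_eq_eval (lam : ℝ) (n : ℕ) :
    laguerre lam n = fun s => (laguerrePoly lam n).eval s := by
  funext s
  simp only [laguerre, laguerrePoly, eval_finsetSum, eval_C_mul, eval_pow, eval_X]
  exact Finset.sum_congr rfl fun k _ => by ring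

lemma laguerrePoly_coeff (lam : ℝ) (n k : ℕ) :
    (laguerrePoly lam n).coeff k =
      if k ≤ n then (-1) ^ k * genBinom (n + lam) (n - k) / k.factorial else 0 := by
  simp [laguerrePoly, coeff_X_pow]

lemma laguerrePoly_coeff_succ (lam : ℝ) (n k : ℕ) :
    (k + 1) * (k + 1 + lam) * (laguerrePoly lam n).coeff (k + 1) =
      (k - n) * (laguerrePoly lam n).coeff k := by
  rcases lt_trichotomy k n with hk | rfl | hk
  · obtain ⟨j, rfl⟩ : ∃ j, n = k + 1 + j := Nat.exists_eq_add_of_le hk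
    have hbinom := genBinom_succ ((k + 1 + j : ℕ) + lam) j
    rw [laguerrePoly_coeff, laguerrePoly_coeff, if_pos (Nat.succ_le_of_lt hk), if_pos hk.le,
      Nat.add_sub_cancel_left, show k + 1 + j - k = j + 1 by lia, Nat.factorial_succ, pow_succ]
    push_cast at hbinom ⊢
    field_simp
    linear_combination hbinom
  · simp [laguerrePoly_coeff]
  · simp [laguerrePoly_coeff, hk.not_ge, (hk.trans k.lt_succ_self).not_ge]

lemma laguerrePoly_ode (lam : ℝ) (n : ℕ) :
    X * (laguerrePoly lam n).derivative.derivative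
      + (C (lam + 1) - X) * (laguerrePoly lam n).derivative
      + C (n : ℝ) * laguerrePoly lam n = 0 := by
  ext k
  have hrec := laguerrePoly_coeff_succ lam n k
  rcases k with _ | k
  · simp only [sub_mul, coeff_add, coeff_sub, coeff_C_mul, coeff_X_mul_zero, coeff_derivative,
      coeff_zero]
    push_cast at hrec ⊢
    linear_combination hrec
  · simp only [sub_mul, coeff_add, coeff_sub, coeff_C_mul, coeff_X_mul, coeff_derivative,
      coeff_zero]
    push_cast at hrec ⊢
    linear_combination hrec

lemma laguerre_ode (lam : ℝ) (n : ℕ) (s : ℝ) :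
    s * deriv (deriv (laguerre lam n)) s + (lam + 1 - s) * deriv (laguerre lam n) s
      + n * laguerre lam n s = 0 := by
  simpa [laguerre_eq_eval, deriv_polynomial_eval] using
    congrArg (eval s) (laguerrePoly_ode lam n)

lemma contDiff_laguerre (lam : ℝ) (n : ℕ) : ContDiff ℝ 2 (laguerre lam n) := by
  rw [laguerre_eq_eval]
  simpa using (laguerrePoly lam n).contDiff_aeval (𝕜 := ℝ) 2

/-- The product `((t - 1) / 2) ^ k * ((t + 1) / 2) ^ j`, of which Jacobi polynomials are linear
combinations. -/
def jacobiBasis (k j : ℕ) : ℝ[X] := (C (1 / 2) * (X - 1)) ^ k * (C (1 / 2) * (X + 1)) ^ j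

/-- The coefficient of `jacobiBasis k (n - k)` in the Jacobi polynomial `P^{(α,β)}_n`. -/
def jacobiCoeff (α β : ℝ) (n k : ℕ) : ℝ := genBinom (n + α) (n - k) * genBinom (n + β) k

/-- The Jacobi polynomial `P^{(α,β)}_n` as an element of `ℝ[X]`. -/
def jacobiPoly (α β : ℝ) (n : ℕ) : ℝ[X] :=
  ∑ k ∈ Finset.range (n + 1), C (jacobiCoeff α β n k) * jacobiBasis k (n - k)

/-- The Jacobi differential operator `p ↦ (1 - t²) p'' + (β - α - (α + β + 2) t) p'`. -/
def jacobiOp (α β : ℝ) : ℝ[X] →ₗ[ℝ] ℝ[X] :=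
  LinearMap.mulLeft ℝ (1 - X ^ 2) ∘ₗ derivative ∘ₗ derivative
    + LinearMap.mulLeft ℝ (C (β - α) - C (α + β + 2) * X) ∘ₗ derivative

lemma jacobi_eq_eval (α β : ℝ) (n : ℕ) :
    jacobi α β n = fun t => (jacobiPoly α β n).eval t := by
  funext t
  simp only [jacobi, jacobiPoly, jacobiCoeff, jacobiBasis, eval_finsetSum, eval_mul, eval_pow,
    eval_C, eval_sub, eval_add, eval_X, eval_one]
  exact Finset.sum_congr rfl fun k _ => by ring

lemma jacobiCoeff_succ (α β : ℝ) {n k : ℕ} (hk : k < n) :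
    (k + 1) * (k + 1 + α) * jacobiCoeff α β n (k + 1) =
      (n - k : ℕ) * ((n - k : ℕ) + β) * jacobiCoeff α β n k := by
  obtain ⟨j, rfl⟩ : ∃ j, n = k + 1 + j := Nat.exists_eq_add_of_le hk
  have hα := genBinom_succ ((k + 1 + j : ℕ) + α) j
  have hβ := genBinom_succ ((k + 1 + j : ℕ) + β) k
  rw [jacobiCoeff, jacobiCoeff, Nat.add_sub_cancel_left, show k + 1 + j - k = j + 1 by lia]
  push_cast at hα hβ ⊢
  linear_combination (genBinom (k + 1 + j + α) j * (k + 1 + α)) * hβ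
    - (j + 1 + β) * genBinom (k + 1 + j + β) k * hα

-- The truncated subtractions at `j = 0` and `k = 0` are harmless, as their coefficients vanish.
lemma jacobiOp_jacobiBasis (α β : ℝ) (k j : ℕ) :
    jacobiOp α β (jacobiBasis k j) + C ((k + j) * (k + j + α + β + 1)) * jacobiBasis k j =
      C (j * (j + β)) * jacobiBasis k (j - 1) - C (k * (k + α)) * jacobiBasis (k - 1) j := by
  refine Polynomial.funext fun t => ?_
  rcases k with _ | _ | k <;> rcases j with _ | _ | j <;>
    simp [jacobiOp, jacobiBasis, derivative_pow] <;> ring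

lemma jacobiPoly_ode (α β : ℝ) (n : ℕ) :
    jacobiOp α β (jacobiPoly α β n) + C (n * (n + α + β + 1)) * jacobiPoly α β n = 0 := by
  have hterm (k : ℕ) (hk : k ∈ Finset.range (n + 1)) :
      jacobiOp α β (C (jacobiCoeff α β n k) * jacobiBasis k (n - k))
          + C (n * (n + α + β + 1)) * (C (jacobiCoeff α β n k) * jacobiBasis k (n - k)) =
        C ((n - k : ℕ) * ((n - k : ℕ) + β) * jacobiCoeff α β n k) * jacobiBasis k (n - k - 1)
          - C (k * (k + α) * jacobiCoeff α β n k) * jacobiBasis (k - 1) (n - k) := by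
    have hkn : (k : ℝ) + (n - k : ℕ) = n := by
      rw [← Nat.cast_add, Nat.add_sub_cancel' (Nat.le_of_lt_succ (Finset.mem_range.1 hk))]
    have h := jacobiOp_jacobiBasis α β k (n - k)
    rw [hkn] at h
    rw [← smul_eq_C_mul (jacobiCoeff α β n k), map_smul, smul_eq_C_mul, smul_eq_C_mul,
      C_mul (a := _ * _), C_mul (a := (k : ℝ) * _)]
    linear_combination C (jacobiCoeff α β n k) * h
  rw [jacobiPoly, map_sum, Finset.mul_sum, ← Finset.sum_add_distrib, Finset.sum_congr rfl hterm,
    Finset.sum_sub_distrib, Finset.sum_range_succ, Finset.sum_range_succ' (n := n)]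
  simp only [Nat.sub_self, Nat.cast_zero, zero_mul, map_zero, add_zero, sub_eq_zero]
  refine Finset.sum_congr rfl fun k hk => ?_
  rw [← jacobiCoeff_succ α β (Finset.mem_range.1 hk), Nat.sub_sub]
  simp

lemma jacobi_ode (α β : ℝ) (n : ℕ) (t : ℝ) :
    (1 - t ^ 2) * deriv (deriv (jacobi α β n)) t
      + (β - α - (α + β + 2) * t) * deriv (jacobi α β n) t
      + n * (n + α + β + 1) * jacobi α β n t = 0 := by
  simpa [jacobi_eq_eval, deriv_polynomial_eval, jacobiOp] using
    congrArg (eval t) (jacobiPoly_ode α β n)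

lemma contDiff_jacobi (α β : ℝ) (n : ℕ) : ContDiff ℝ 2 (jacobi α β n) := by
  rw [jacobi_eq_eval]
  simpa using (jacobiPoly α β n).contDiff_aeval (𝕜 := ℝ) 2

end ClassicalPolynomials

section RadialFactor

lemma deriv_exp_mul_comp_mul {f : ℝ → ℝ} (hf : Differentiable ℝ f) (c ω : ℝ) :
    deriv (fun s => Real.exp (c * s) * f (ω * s)) =
      fun s => Real.exp (c * s) * (c * f (ω * s) + ω * deriv f (ω * s)) := by
  funext s
  have hexp : HasDerivAt (fun s => Real.exp (c * s)) (Real.exp (c * s) * c) s :=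
    (hasDerivAt_const_mul c).exp
  have hcomp : HasDerivAt (fun s => f (ω * s)) (deriv f (ω * s) * ω) s :=
    (hf (ω * s)).hasDerivAt.comp s (hasDerivAt_const_mul ω)
  rw [(hexp.fun_mul hcomp).deriv]
  ring

/-- The factor `e^{-ω s / 2} L^{(lam)}_l(ω s)` of the eigenfunction, where `s` stands for `r²`. -/
def radialFactor (ω lam : ℝ) (l : ℕ) (s : ℝ) : ℝ :=
  Real.exp (-(ω / 2) * s) * laguerre lam l (ω * s)

lemma contDiff_radialFactor (ω lam : ℝ) (l : ℕ) : ContDiff ℝ 2 (radialFactor ω lam l) := by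
  have := contDiff_laguerre lam l
  unfold radialFactor
  fun_prop

lemma radialFactor_ode (ω lam : ℝ) (l : ℕ) (s : ℝ) :
    4 * s * deriv (deriv (radialFactor ω lam l)) s
        + 4 * (lam + 1) * deriv (radialFactor ω lam l) s =
      (ω ^ 2 * s - 2 * ω * (lam + 1) - 4 * ω * l) * radialFactor ω lam l s := by
  have hL := contDiff_laguerre lam l
  have hL₁ : Differentiable ℝ (laguerre lam l) := hL.differentiable two_ne_zero
  have hL₂ : Differentiable ℝ (deriv (laguerre lam l)) := hL.differentiable_deriv_two
  have hderiv : deriv (radialFactor ω lam l) = _ := deriv_exp_mul_comp_mul hL₁ (-(ω / 2)) ω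
  have hderiv₂ := deriv_exp_mul_comp_mul
    (f := fun u => -(ω / 2) * laguerre lam l u + ω * deriv (laguerre lam l) u)
    ((hL₁.const_mul _).add (hL₂.const_mul _)) (-(ω / 2)) ω
  have hderiv_f (u : ℝ) :
      deriv (fun u => -(ω / 2) * laguerre lam l u + ω * deriv (laguerre lam l) u) u =
        -(ω / 2) * deriv (laguerre lam l) u + ω * deriv (deriv (laguerre lam l)) u := by
    rw [deriv_fun_add ((hL₁ u).const_mul _) ((hL₂ u).const_mul _), deriv_const_mul_field,
      deriv_const_mul_field]
  simp only [hderiv, hderiv₂, hderiv_f, radialFactor]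
  linear_combination 4 * ω * Real.exp (-(ω / 2) * s) * laguerre_ode lam l (ω * s)

end RadialFactor

section Jastrow

variable {N : ℕ} [NeZero N] {x : Fin N → ℝ}

/-- The Jastrow factor `∏ i |x_i - x_{i+1}|^a` of cyclic neighbours. -/
def jastrow (a : ℝ) (x : Fin N → ℝ) : ℝ := ∏ i, |x i - x (i + 1)| ^ a

/-- The gradient `h_i = (x_i - x_{i+1})⁻¹ - (x_{i-1} - x_i)⁻¹` of `∑ j log |x_j - x_{j+1}|`. -/
def jastrowDrift (x : Fin N → ℝ) (i : Fin N) : ℝ :=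
  (x i - x (i + 1))⁻¹ - (x (i - 1) - x i)⁻¹

lemma sum_apply_sub_one (f : Fin N → ℝ) : ∑ i, f (i - 1) = ∑ i, f i :=
  Fintype.sum_equiv (Equiv.subRight 1) _ _ fun _ => rfl

lemma isOpen_setOf_neighbours_ne : IsOpen {z : Fin N → ℝ | ∀ i, z i ≠ z (i + 1)} := by
  simp only [Set.ofPred_forall]
  exact isOpen_iInter_of_finite fun i =>
    isOpen_ne_fun (continuous_apply i) (continuous_apply (i + 1))

lemma jastrow_eq_exp (a : ℝ) (hx : ∀ i, x i ≠ x (i + 1)) :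
    jastrow a x = Real.exp (a * ∑ i, Real.log (x i - x (i + 1))) := by
  rw [Finset.mul_sum, Real.exp_sum]
  refine Finset.prod_congr rfl fun i _ => ?_
  rw [Real.rpow_def_of_pos (abs_pos.2 (sub_ne_zero.2 (hx i))), Real.log_abs, mul_comm]

lemma contDiffAt_sum_log (hx : ∀ i, x i ≠ x (i + 1)) :
    ContDiffAt ℝ 2 (fun z : Fin N → ℝ => ∑ i, Real.log (z i - z (i + 1))) x := by
  refine ContDiffAt.sum fun i _ => ContDiffAt.log ?_ (sub_ne_zero.2 (hx i))
  fun_prop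

lemma jastrow_eventuallyEq_exp (a : ℝ) (hx : ∀ i, x i ≠ x (i + 1)) :
    jastrow a =ᶠ[nhds x] fun z => Real.exp (a * ∑ i, Real.log (z i - z (i + 1))) := by
  filter_upwards [isOpen_setOf_neighbours_ne.mem_nhds hx] with z hz using jastrow_eq_exp a hz

lemma contDiffAt_jastrow (a : ℝ) (hx : ∀ i, x i ≠ x (i + 1)) :
    ContDiffAt ℝ 2 (jastrow a) x :=
  (contDiffAt_const.mul (contDiffAt_sum_log hx)).exp.congr_of_eventuallyEq
    (jastrow_eventuallyEq_exp a hx)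

lemma pd_sum_log (hx : ∀ i, x i ≠ x (i + 1)) (i : Fin N) :
    pd i (fun z => ∑ j, Real.log (z j - z (j + 1))) x = jastrowDrift x i := by
  have hlog (j : Fin N) : pd i (fun z => Real.log (z j - z (j + 1))) x =
      (x j - x (j + 1))⁻¹ * ((if j = i then 1 else 0) - (if j + 1 = i then 1 else 0)) := by
    rw [pd_comp (Real.differentiableAt_log (sub_ne_zero.2 (hx j))) (by fun_prop),
      Real.deriv_log, pd_apply_sub_apply]
  rw [pd_sum _ fun j _ => DifferentiableAt.log (by fun_prop) (sub_ne_zero.2 (hx j))]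
  simp [hlog, jastrowDrift, mul_sub, ← eq_sub_iff_add_eq]

lemma pd_jastrow (a : ℝ) (hx : ∀ i, x i ≠ x (i + 1)) (i : Fin N) :
    pd i (jastrow a) x = jastrow a x * (a * jastrowDrift x i) := by
  have hexp (s : ℝ) : HasDerivAt (fun s => Real.exp (a * s)) (Real.exp (a * s) * a) s :=
    (hasDerivAt_const_mul a).exp
  rw [pd_congr (jastrow_eventuallyEq_exp a hx), pd_comp (φ := fun s => Real.exp (a * s))
    (hexp _).differentiableAt ((contDiffAt_sum_log hx).differentiableAt two_ne_zero),
    (hexp _).deriv, pd_sum_log hx, jastrow_eq_exp a hx, mul_assoc]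

lemma differentiableAt_jastrowDrift (hx : ∀ i, x i ≠ x (i + 1)) (i : Fin N) :
    DifferentiableAt ℝ (fun z => jastrowDrift z i) x :=
  (differentiableAt_inv_sub (hx i)).fun_sub
    (differentiableAt_inv_sub (by simpa using hx (i - 1)))

lemma pd_jastrowDrift (hx : ∀ i, x i ≠ x (i + 1)) (i : Fin N) :
    pd i (fun z => jastrowDrift z i) x =
      -(((x i - x (i + 1)) ^ 2)⁻¹ + ((x (i - 1) - x i) ^ 2)⁻¹) := by
  have hprev : x (i - 1) ≠ x i := by simpa using hx (i - 1)
  have hsucc_ne : i + 1 ≠ i := fun h => hx i (congrArg x h.symm)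
  have hprev_ne : i - 1 ≠ i := fun h => hprev (congrArg x h)
  simp only [jastrowDrift]
  rw [pd_sub (differentiableAt_inv_sub (hx i)) (differentiableAt_inv_sub hprev),
    pd_inv_sub (hx i), pd_inv_sub hprev, if_pos rfl, if_neg hsucc_ne, if_neg hprev_ne]
  ring

lemma pd_pd_jastrow (a : ℝ) (hx : ∀ i, x i ≠ x (i + 1)) (i : Fin N) :
    pd i (pd i (jastrow a)) x = (a ^ 2 * jastrowDrift x i ^ 2
      - a * (((x i - x (i + 1)) ^ 2)⁻¹ + ((x (i - 1) - x i) ^ 2)⁻¹)) * jastrow a x := by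
  have hfirst : pd i (jastrow a) =ᶠ[nhds x] fun z => jastrow a z * (a * jastrowDrift z i) := by
    filter_upwards [isOpen_setOf_neighbours_ne.mem_nhds hx] with z hz using pd_jastrow a hz i
  have hdrift := differentiableAt_jastrowDrift hx i
  rw [pd_congr hfirst, pd_mul ((contDiffAt_jastrow a hx).differentiableAt two_ne_zero)
    (hdrift.const_mul a), pd_jastrow a hx, pd_comp (φ := fun s => a * s) (by fun_prop) hdrift,
    (hasDerivAt_const_mul a).deriv, pd_jastrowDrift hx]
  ring

lemma sum_jastrowDrift (x : Fin N → ℝ) : ∑ i, jastrowDrift x i = 0 := by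
  have h := sum_apply_sub_one fun i => (x i - x (i + 1))⁻¹
  simp only [sub_add_cancel] at h
  simp only [jastrowDrift, Finset.sum_sub_distrib, h, sub_self]

lemma sum_jastrowDrift_mul (hx : ∀ i, x i ≠ x (i + 1)) : ∑ i, jastrowDrift x i * x i = N := by
  have h := sum_apply_sub_one fun i => (x i - x (i + 1))⁻¹ * x (i + 1)
  simp only [sub_add_cancel] at h
  simp only [jastrowDrift, sub_mul, Finset.sum_sub_distrib, h]
  simp [← Finset.sum_sub_distrib, ← mul_sub, sub_ne_zero.2 (hx _)]

lemma sum_pd_pd_jastrow (a : ℝ) (hx : ∀ i, x i ≠ x (i + 1)) :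
    ∑ i, pd i (pd i (jastrow a)) x =
      (∑ i, 2 * a ^ 2 / ((x i - x (i - 1)) * (x i - x (i + 1)))
        + ∑ i, 2 * a / (x i - x (i + 1)) ^ 2 * (a - 1)) * jastrow a x := by
  have hterm (i : Fin N) : a ^ 2 * jastrowDrift x i ^ 2
      - a * (((x i - x (i + 1)) ^ 2)⁻¹ + ((x (i - 1) - x i) ^ 2)⁻¹) =
      2 * a ^ 2 / ((x i - x (i - 1)) * (x i - x (i + 1)))
      + a * (a - 1) * ((x i - x (i + 1)) ^ 2)⁻¹ + a * (a - 1) * ((x (i - 1) - x i) ^ 2)⁻¹ := by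
    have hneg : (x i - x (i - 1))⁻¹ = -(x (i - 1) - x i)⁻¹ := by rw [← inv_neg, neg_sub]
    rw [jastrowDrift, div_eq_mul_inv, mul_inv, hneg, ← inv_pow, ← inv_pow]
    ring
  have hshift := sum_apply_sub_one fun i => a * (a - 1) * ((x i - x (i + 1)) ^ 2)⁻¹
  simp only [sub_add_cancel] at hshift
  rw [Finset.sum_congr rfl fun i _ => pd_pd_jastrow a hx i, ← Finset.sum_mul,
    Finset.sum_congr rfl fun i _ => hterm i, Finset.sum_add_distrib, Finset.sum_add_distrib,
    hshift, add_assoc, ← Finset.sum_add_distrib]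
  congr 2
  exact Finset.sum_congr rfl fun i _ => by ring

end Jastrow

section Eigenfunctions

variable {N : ℕ} {x b : Fin N → ℝ} {δ : ℝ}

-- The roots of `n (n + 1/2 - m) + m (m - 1)/4` in `n` are `m/2` and `(m - 1)/2`; one is `⌊m/2⌋`.
lemma natCast_half_mul (m : ℕ) :
    ((m / 2 : ℕ) : ℝ) * ((m / 2 : ℕ) + 1 / 2 - m) = -(m * (m - 1) / 4) := by
  rcases Nat.even_or_odd' m with ⟨n, rfl | rfl⟩
  · rw [show 2 * n / 2 = n by lia]
    push_cast
    ring
  · rw [show (2 * n + 1) / 2 = n by lia]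
    push_cast
    ring

lemma driftLaplacian_xbar_zpow_mul_jacobi [NeZero N] (hb : ∑ i, b i = 0)
    (hδ : N + ∑ i, b i * x i = 2 * δ) (m : ℕ) (hx : xbar x ≠ 0) :
    driftLaplacian b
      (fun z => xbar z ^ (m : ℤ) * jacobi (δ - 3 / 2) (1 - m - δ) (m / 2) (tvar z)) x = 0 := by
  have hode := jacobi_ode (δ - 3 / 2) (1 - m - δ) (m / 2) (tvar x)
  rw [driftLaplacian_xbar_zpow_mul_comp_tvar _ hb (contDiff_jacobi _ _ _).contDiffAt hx, hδ,
    Int.cast_natCast]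
  refine mul_eq_zero_of_right _ ?_
  linear_combination hode - jacobi (δ - 3 / 2) (1 - m - δ) (m / 2) (tvar x) * natCast_half_mul m

lemma driftLaplacian_radialFactor_mul {Q : (Fin N → ℝ) → ℝ} {k : ℝ} (ω : ℝ) (l : ℕ)
    (hδ : N + ∑ i, b i * x i = 2 * δ) (hQ : ContDiffAt ℝ 2 Q x)
    (heuler : carreDuChamp rSq Q x = 2 * k * Q x) (hharm : driftLaplacian b Q x = 0) :
    driftLaplacian b (fun z => radialFactor ω (k + δ - 1) l (rSq z) * Q z) x =
      (ω ^ 2 * rSq x - 2 * ω * (2 * l + k + δ)) *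
        (radialFactor ω (k + δ - 1) l (rSq x) * Q x) := by
  rw [driftLaplacian_comp_rSq_mul (contDiff_radialFactor _ _ _).contDiffAt hQ heuler hharm, hδ]
  linear_combination Q x * radialFactor_ode ω (k + δ - 1) l (rSq x)

end Eigenfunctions

section Spin

variable {N d : ℕ}

lemma Lam_eq [NeZero N] (s : Spin N d) :
    Lam s = (N.factorial : ℂ)⁻¹ • ∑ π : Equiv.Perm (Fin N), spinPerm π s := by
  simp only [Lam, sComp, ← Finset.smul_sum]
  exact congrArg _ (Finset.sum_fiberwise _ (fun π : Equiv.Perm (Fin N) => π 0) _)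

lemma Sop_Lam [NeZero N] (s : Spin N d) (i j : Fin N) : Sop i j (Lam s) = Lam s := by
  rw [Lam_eq]
  funext c
  simp only [Sop, Pi.smul_apply, Finset.sum_apply, spinPerm]
  exact congrArg _ (Fintype.sum_equiv (Equiv.mulLeft (Equiv.swap i j)) _ _ fun _ => rfl)

lemma Sop_smul (i j : Fin N) (r : ℝ) (v : Spin N d) : Sop i j (r • v) = r • Sop i j v := rfl

lemma H0_mul_jastrow_smul [NeZero N] (a ω : ℝ) {v : Spin N d} (hv : ∀ i, Sop i (i + 1) v = v)
    {x : Fin N → ℝ} (hx : ∀ i, x i ≠ x (i + 1)) {F : (Fin N → ℝ) → ℝ}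
    (hF : ContDiffAt ℝ 2 F x) :
    H0 a ω (fun z => (F z * jastrow a z) • v) x =
      ((ω ^ 2 * rSq x * F x - driftLaplacian (fun i => 2 * (a * jastrowDrift x i)) F x)
        * jastrow a x) • v := by
  have hw := contDiffAt_jastrow a hx
  have hexchange (c : Fin N → ℝ) (r : ℝ) :
      ∑ i, c i • (a • r • v - r • v) = (∑ i, c i * (a - 1)) • r • v := by
    rw [Finset.sum_smul]
    exact Finset.sum_congr rfl fun i _ => by module
  simp only [H0, pd_pd_smul_const (hF.mul hw), Sop_smul, hv, ← Finset.sum_smul, hexchange]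
  rw [sum_pd_pd_mul_eq_driftLaplacian hF hw (pd_jastrow a hx), sum_pd_pd_jastrow a hx, rSq]
  module

end Spin

lemma mulm_mul_eq {N : ℕ} [NeZero N] (a ω : ℝ) (l m : ℕ) (z : Fin N → ℝ) (p : ℝ) :
    mulm a ω l m z * p =
      radialFactor ω (m + N * (a + 1 / 2) - 1) l (rSq z) * (xbar z ^ (m : ℤ) * p)
        * jastrow a z := by
  rw [mulm, radialFactor, rSq, jastrow, zpow_natCast,
    show -(1 - m - N * (a + 1 / 2)) = m + N * (a + 1 / 2) - 1 by ring]
  ring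

lemma neighbours_ne_of_strictMono {N : ℕ} [NeZero N] (hN : 2 ≤ N) {x : Fin N → ℝ}
    (hx : StrictMono x) (i : Fin N) : x i ≠ x (i + 1) := by
  have hone : (1 : Fin N) ≠ 0 := by simp [Fin.ext_iff, Nat.mod_eq_of_lt hN]
  exact hx.injective.ne (left_ne_add.2 hone)

theorem stmt_18_general {N d : ℕ} [NeZero N] (a ω : ℝ) {v : Spin N d}
    (hv : ∀ i, Sop i (i + 1) v = v) (l m : ℕ) {x : Fin N → ℝ}
    (hx : ∀ i, x i ≠ x (i + 1)) (hxbar : xbar x ≠ 0) :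
    H0 a ω (fun y =>
        (mulm a ω l m y *
          jacobi ((N : ℝ) * (a + 1 / 2) - 3 / 2) (1 - (m : ℝ) - (N : ℝ) * (a + 1 / 2))
            (m / 2) (tvar y)) • v) x =
      ((N : ℝ) * ω * (2 * a + 1) + 2 * ω * (2 * l + m)) •
        ((mulm a ω l m x *
          jacobi ((N : ℝ) * (a + 1 / 2) - 3 / 2) (1 - (m : ℝ) - (N : ℝ) * (a + 1 / 2))
            (m / 2) (tvar x)) • v) := by
  have hJ := contDiff_jacobi (N * (a + 1 / 2) - 3 / 2) (1 - m - N * (a + 1 / 2)) (m / 2)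
  have hQ := (contDiffAt_xbar_zpow m hxbar).mul
    (hJ.contDiffAt.fun_comp x (contDiffAt_tvar hxbar))
  have hg := (contDiff_radialFactor ω (m + N * (a + 1 / 2) - 1) l).fun_comp (contDiff_rSq (N := N))
  have hdrift : ∑ i, 2 * (a * jastrowDrift x i) = 0 := by
    rw [← Finset.mul_sum, ← Finset.mul_sum, sum_jastrowDrift, mul_zero, mul_zero]
  have hdim : N + ∑ i, 2 * (a * jastrowDrift x i) * x i = 2 * (N * (a + 1 / 2)) := by
    simp only [mul_assoc, ← Finset.mul_sum, sum_jastrowDrift_mul hx]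
    ring
  have heuler := carreDuChamp_rSq_xbar_zpow_mul_comp_tvar m hJ.contDiffAt hxbar
  rw [Int.cast_natCast] at heuler
  have hharm := driftLaplacian_xbar_zpow_mul_jacobi hdrift hdim m hxbar
  simp only [mulm_mul_eq]
  rw [H0_mul_jastrow_smul a ω hv hx (hg.contDiffAt.mul hQ),
    driftLaplacian_radialFactor_mul ω l hdim hQ heuler hharm, smul_smul]
  congr 1
  ring

theorem stmt_18 (N d : ℕ) [NeZero N] (hN : 3 ≤ N) (hd : 1 ≤ d)
    (a ω : ℝ) (ha : 1 / 2 < a) (hω : 0 < ω)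
    (s : Spin N d) (l m : ℕ) :
    ∀ x ∈ C0 N, xbar x ≠ 0 →
      H0 a ω (fun y =>
          (mulm a ω l m y *
            jacobi ((N : ℝ) * (a + 1 / 2) - 3 / 2) (1 - (m : ℝ) - (N : ℝ) * (a + 1 / 2))
              (m / 2) (tvar y)) • Lam s) x =
        ((N : ℝ) * ω * (2 * a + 1) + 2 * ω * (2 * l + m)) •
          ((mulm a ω l m x *
            jacobi ((N : ℝ) * (a + 1 / 2) - 3 / 2) (1 - (m : ℝ) - (N : ℝ) * (a + 1 / 2))
              (m / 2) (tvar x)) • Lam s) :=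
  fun _ hx hxbar => stmt_18_general a ω (fun i => Sop_Lam s i (i + 1)) l m
    (neighbours_ne_of_strictMono (by lia) hx) hxbar
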